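/- Let n, p, m be positive natural numbers, θ ∈ ℝ^p, γ > 0, c₁, c₂, c₃ > 0, λ̄ > 0, T ≥ 0, and let Γ be a symmetric positive definite real p×p matrix with μ_min, μ_max the smallest and largest eigenvalues of Γ⁻¹; set η₁ := min(c₁, μ_min/2), η₂ := max(c₂, μ_max/2), and η₃ := min(γ·λ̄, c₁·c₃). Let V : ℝⁿ → ℝ be differentiable with gradient ∇V and satisfy c₁‖x‖² ≤ V(x) ≤ c₂‖x‖² for all x. Let f : ℝⁿ → ℝⁿ, Y : ℝⁿ → Matrix (Fin n) (Fin p) ℝ, g : ℝⁿ → Matrix (Fin n) (Fin m) ℝ, u : ℝ → ℝᵐ, and Λ : ℝ → Matrix (Fin p) (Fin p) ℝ with each Λ(t) symmetric positive semidefinite and, for all t ≥ T, ⟨v, Λ(t)·v⟩ ≥ λ̄·‖v‖² for every v ∈ ℝ^p. Suppose x : ℝ → ℝⁿ and θ̂ : ℝ → ℝ^p are differentiable with x'(t) = f(x(t)) + Y(x(t))·θ + g(x(t))·u(t) and θ̂'(t) = Γ·((Y(x(t)))ᵀ·∇V(x(t))) + γ·Γ·Λ(t)·(θ − θ̂(t))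 for all t ≥ 0, and that ⟨∇V(x(t)), f(x(t)) + Y(x(t))·θ̂(t) + g(x(t))·u(t)⟩ ≤ −c₃·V(x(t)) for all t ≥ 0. Then: (i) for all t ∈ [0, T], ‖x(t)‖² + ‖θ − θ̂(t)‖² ≤ (η₂/η₁)·(‖x(0)‖² + ‖θ − θ̂(0)‖²); and (ii) for all t ≥ T, √(‖x(t)‖² + ‖θ − θ̂(t)‖²) ≤ √(η₂/η₁) · √(‖x(T)‖² + ‖θ − θ̂(T)‖²) · exp( −(η₃/(2η₂))·(t − T) ). -/

import Mathlib

open scoped InnerProductSpace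

/-!
With `e = θ - θ̂`, take the Lyapunov function `W = V(x) + ½⟪Γ⁻¹ e, e⟫`. Estimating `θ` by `θ̂`
leaves the indefinite term `⟪∇V, Y e⟫` in `W'`, and the first term of the update law is chosen so
that `⟪Γ⁻¹ e, e'⟫` cancels it: `W' ≤ -c₃ V - γ⟪e, Λ e⟫`. As `W` lies between `η₁‖z‖²` and `η₂‖z‖²`,
Grönwall's inequality gives both bounds: with rate `0` while `Λ` is only semidefinite, and with rate
`η₃ / η₂` once `Λ ≥ λ̄`.
-/

section ScalarInequalities

variable {R : Type*} [Semiring R] [LinearOrder R] [IsOrderedRing R] {a b r s : R}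

lemma min_mul_add_le (hr : 0 ≤ r) (hs : 0 ≤ s) : min a b * (r + s) ≤ a * r + b * s := by
  rw [mul_add]
  gcongr
  exacts [min_le_left a b, min_le_right a b]

lemma le_max_mul_add (hr : 0 ≤ r) (hs : 0 ≤ s) : a * r + b * s ≤ max a b * (r + s) := by
  rw [mul_add]
  gcongr
  exacts [le_max_left a b, le_max_right a b]

end ScalarInequalities

lemma sqrt_le_sqrt_mul_sqrt_mul_exp_half {q r s k : ℝ} (hq : 0 ≤ q)
    (h : s ≤ q * r * Real.exp k) : √s ≤ √q * √r * Real.exp (k / 2) := by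
  rw [Real.exp_half, ← Real.sqrt_mul hq, ← Real.sqrt_mul' _ (Real.exp_nonneg k)]
  exact Real.sqrt_le_sqrt h

section Lyapunov

variable {W W' z : ℝ → ℝ} {a t : ℝ}

lemma le_mul_exp_of_hasDerivWithinAt_le {k : ℝ}
    (hW : ∀ s, a ≤ s → HasDerivWithinAt W (W' s) (Set.Ici a) s)
    (hW' : ∀ s, a ≤ s → W' s ≤ k * W s) (ht : a ≤ t) :
    W t ≤ W a * Real.exp (k * (t - a)) := by
  rw [← gronwallBound_ε0]
  refine le_gronwallBound_of_liminf_deriv_right_le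
    (fun s hs => (hW s hs.1).continuousWithinAt.mono Set.Icc_subset_Ici_self)
    (fun s hs _ hr => ((hW s hs.1).mono (Set.Ici_subset_Ici.2 hs.1)).liminf_right_slope_le hr)
    le_rfl (fun s hs => ?_) t (Set.right_mem_Icc.2 ht)
  simpa only [add_zero] using hW' s hs.1

lemma le_div_mul_exp_of_lyapunov {η₁ η₂ η₃ : ℝ} (hη₁ : 0 < η₁) (hη₂ : 0 < η₂) (hη₃ : 0 ≤ η₃)
    (hW : ∀ s, a ≤ s → HasDerivWithinAt W (W' s) (Set.Ici a) s)
    (hlower : ∀ s, a ≤ s → η₁ * z s ≤ W s) (hupper : ∀ s, a ≤ s → W s ≤ η₂ * z s)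
    (hW' : ∀ s, a ≤ s → W' s ≤ -(η₃ * z s)) (ht : a ≤ t) :
    z t ≤ η₂ / η₁ * z a * Real.exp (-(η₃ / η₂) * (t - a)) := by
  have hrate : ∀ s, a ≤ s → W' s ≤ -(η₃ / η₂) * W s := fun s hs => calc
    W' s ≤ -(η₃ / η₂ * (η₂ * z s)) := by
      rw [← mul_assoc, div_mul_cancel₀ η₃ hη₂.ne']
      exact hW' s hs
    _ ≤ -(η₃ / η₂ * W s) := by
      gcongr
      exact hupper s hs
    _ = -(η₃ / η₂) * W s := (neg_mul _ _).symm
  have hscaled : η₁ * z t ≤ η₂ * z a * Real.exp (-(η₃ / η₂) * (t - a)) := calc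
    η₁ * z t ≤ W t := hlower t ht
    _ ≤ W a * Real.exp (-(η₃ / η₂) * (t - a)) := le_mul_exp_of_hasDerivWithinAt_le hW hrate ht
    _ ≤ η₂ * z a * Real.exp (-(η₃ / η₂) * (t - a)) := by
      gcongr
      exact hupper a le_rfl
  rwa [div_mul_eq_mul_div, div_mul_eq_mul_div, le_div_iff₀' hη₁]

end Lyapunov

section MatrixForms

open Matrix

variable {𝕜 ι κ : Type*} [RCLike 𝕜] [Fintype ι] [DecidableEq ι] [Fintype κ] [DecidableEq κ]
  {A : Matrix ι ι 𝕜}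

lemma re_inner_toEuclideanLin_self_eq_sum_eigenvalues (hA : A.IsHermitian)
    (v : EuclideanSpace 𝕜 ι) :
    RCLike.re ⟪toEuclideanLin A v, v⟫_𝕜 =
      ∑ i, hA.eigenvalues i * ‖⟪hA.eigenvectorBasis i, v⟫_𝕜‖ ^ 2 := by
  have heig : ∀ i, toEuclideanLin A (hA.eigenvectorBasis i) =
      (hA.eigenvalues i : 𝕜) • hA.eigenvectorBasis i := fun i => by
    apply WithLp.ofLp_injective 2
    simpa [toLpLin_apply] using hA.mulVec_eigenvectorBasis i
  rw [← hA.eigenvectorBasis.sum_inner_mul_inner, map_sum]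
  refine Finset.sum_congr rfl fun i _ => ?_
  rw [isSymmetric_toEuclideanLin_iff.2 hA, heig, inner_smul_right, mul_assoc,
    RCLike.re_ofReal_mul, inner_mul_symm_re_eq_norm, norm_mul, norm_inner_symm v, ← sq]

lemma iInf_eigenvalues_mul_norm_sq_le (hA : A.IsHermitian) (v : EuclideanSpace 𝕜 ι) :
    (⨅ i, hA.eigenvalues i) * ‖v‖ ^ 2 ≤ RCLike.re ⟪toEuclideanLin A v, v⟫_𝕜 := by
  rw [re_inner_toEuclideanLin_self_eq_sum_eigenvalues hA,
    ← hA.eigenvectorBasis.sum_sq_norm_inner_right v, Finset.mul_sum]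
  gcongr with i
  exact ciInf_le (Set.finite_range _).bddBelow i

lemma le_iSup_eigenvalues_mul_norm_sq (hA : A.IsHermitian) (v : EuclideanSpace 𝕜 ι) :
    RCLike.re ⟪toEuclideanLin A v, v⟫_𝕜 ≤ (⨆ i, hA.eigenvalues i) * ‖v‖ ^ 2 := by
  rw [re_inner_toEuclideanLin_self_eq_sum_eigenvalues hA,
    ← hA.eigenvectorBasis.sum_sq_norm_inner_right v, Finset.mul_sum]
  gcongr with i
  exact le_ciSup (Set.finite_range _).bddAbove i

open scoped ComplexOrder in
lemma iInf_eigenvalues_pos [Nonempty ι] (hA : A.PosDef) :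
    0 < ⨅ i, hA.isHermitian.eigenvalues i := by
  obtain ⟨i, hi⟩ := exists_eq_ciInf_of_finite (f := hA.isHermitian.eigenvalues)
  exact hi ▸ hA.eigenvalues_pos i

lemma leftInverse_toEuclideanLin_nonsing_inv (hA : IsUnit A.det) :
    Function.LeftInverse (toEuclideanLin A⁻¹) (toEuclideanLin A) := fun v => by
  simp [toLpLin_apply, mulVec_mulVec, nonsing_inv_mul A hA]

lemma adjoint_toContinuousLinearMap_toEuclideanLin (B : Matrix ι κ 𝕜) :
    ContinuousLinearMap.adjoint (toEuclideanLin B).toContinuousLinearMap =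
      (toEuclideanLin Bᴴ).toContinuousLinearMap := by
  rw [toEuclideanLin_conjTranspose_eq_adjoint, LinearMap.adjoint_toContinuousLinearMap]

end MatrixForms

section ClosedLoop

variable {E F : Type*} [NormedAddCommGroup F] [InnerProductSpace ℝ F]

/-- The composite Lyapunov function `V(y) + ½⟪P e, e⟫` of adaptive control, at the state `y` and the
parameter error `e`; the weight `P` stands for the inverse of the adaptation gain. -/
noncomputable def compositeLyapunov (V : E → ℝ) (P : F →L[ℝ] F) (y : E) (e : F) : ℝ :=
  V y + P.reApplyInnerSelf e / 2

variable [NormedAddCommGroup E] {V : E → ℝ} {P : F →L[ℝ] F}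

lemma min_mul_norm_sq_add_norm_sq_le_compositeLyapunov {c μ : ℝ} {y : E} {e : F}
    (hV : c * ‖y‖ ^ 2 ≤ V y) (hP : μ * ‖e‖ ^ 2 ≤ ⟪P e, e⟫_ℝ) :
    min c (μ / 2) * (‖y‖ ^ 2 + ‖e‖ ^ 2) ≤ compositeLyapunov V P y e := calc
  _ ≤ c * ‖y‖ ^ 2 + μ / 2 * ‖e‖ ^ 2 := min_mul_add_le (sq_nonneg _) (sq_nonneg _)
  _ ≤ V y + ⟪P e, e⟫_ℝ / 2 := by linarith

lemma compositeLyapunov_le_max_mul_norm_sq_add_norm_sq {c μ : ℝ} {y : E} {e : F}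
    (hV : V y ≤ c * ‖y‖ ^ 2) (hP : ⟪P e, e⟫_ℝ ≤ μ * ‖e‖ ^ 2) :
    compositeLyapunov V P y e ≤ max c (μ / 2) * (‖y‖ ^ 2 + ‖e‖ ^ 2) := calc
  V y + ⟪P e, e⟫_ℝ / 2 ≤ c * ‖y‖ ^ 2 + μ / 2 * ‖e‖ ^ 2 := by linarith
  _ ≤ _ := le_max_mul_add (sq_nonneg _) (sq_nonneg _)

variable [InnerProductSpace ℝ E] [CompleteSpace E]

lemma hasDerivWithinAt_compositeLyapunov (hP : P.IsSymmetric)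
    {x : ℝ → E} {e : ℝ → F} {v x' : E} {e' : F} {S : Set ℝ} {t : ℝ}
    (hV : HasGradientAt V v (x t)) (hx : HasDerivWithinAt x x' S t)
    (he : HasDerivWithinAt e e' S t) :
    HasDerivWithinAt (fun s => compositeLyapunov V P (x s) (e s))
      (⟪v, x'⟫_ℝ + ⟪P (e t), e'⟫_ℝ) S t := by
  have hVx := hV.hasFDerivAt.comp_hasDerivWithinAt t hx
  have hPe := (hP.hasStrictFDerivAt_reApplyInnerSelf (e t)).hasFDerivAt.comp_hasDerivWithinAt t he
  refine (hVx.add (hPe.div_const 2)).congr_deriv ?_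
  simp

lemma inner_add_inner_update_eq [CompleteSpace F] (hP : P.IsSymmetric)
    {Γ : F →L[ℝ] F} (hPΓ : Function.LeftInverse P Γ) (Λ : F →L[ℝ] F) (Y : F →L[ℝ] E) (γ : ℝ)
    (v a b : E) (θ θhat : F) :
    ⟪v, a + Y θ + b⟫_ℝ +
        ⟪P (θ - θhat),
          -(Γ (ContinuousLinearMap.adjoint Y v) + γ • Γ (Λ (θ - θhat)))⟫_ℝ =
      ⟪v, a + Y θhat + b⟫_ℝ - γ * ⟪θ - θhat, Λ (θ - θhat)⟫_ℝ := by
  have hgain : ∀ w, ⟪P (θ - θhat), Γ w⟫_ℝ = ⟪θ - θhat, w⟫_ℝ := fun w => by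
    rw [← ContinuousLinearMap.coe_coe, hP, ContinuousLinearMap.coe_coe, hPΓ]
  have hmismatch : ⟪θ - θhat, ContinuousLinearMap.adjoint Y v⟫_ℝ = ⟪v, Y θ⟫_ℝ - ⟪v, Y θhat⟫_ℝ := by
    rw [ContinuousLinearMap.adjoint_inner_right, map_sub, real_inner_comm, inner_sub_right]
  simp only [inner_neg_right, inner_add_right, real_inner_smul_right, hgain, hmismatch]
  ring

end ClosedLoop

theorem es_aclf_exponential_convergence_general
    {E F U : Type*} [NormedAddCommGroup E] [InnerProductSpace ℝ E] [CompleteSpace E]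
    [NormedAddCommGroup F] [InnerProductSpace ℝ F] [CompleteSpace F]
    {θ : F} {γ c₁ c₂ c₃ lamBar T μmin μmax η₁ η₂ η₃ : ℝ}
    (hγ : 0 ≤ γ) (hc₁ : 0 < c₁) (hc₂ : 0 < c₂) (hc₃ : 0 ≤ c₃) (hlamBar : 0 ≤ lamBar) (hT : 0 ≤ T)
    {Γ Γinv : F →L[ℝ] F} (hΓinv : Function.LeftInverse Γinv Γ) (hsymm : Γinv.IsSymmetric)
    (hμmin_pos : 0 < μmin) (hμmin : ∀ v, μmin * ‖v‖ ^ 2 ≤ ⟪Γinv v, v⟫_ℝ)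
    (hμmax : ∀ v, ⟪Γinv v, v⟫_ℝ ≤ μmax * ‖v‖ ^ 2)
    (hη₁ : η₁ = min c₁ (μmin / 2)) (hη₂ : η₂ = max c₂ (μmax / 2))
    (hη₃ : η₃ = min (γ * lamBar) (c₁ * c₃))
    {V : E → ℝ} {gradV : E → E} (hV : ∀ y, HasGradientAt V (gradV y) y)
    (hVbound : ∀ y, c₁ * ‖y‖ ^ 2 ≤ V y ∧ V y ≤ c₂ * ‖y‖ ^ 2)
    {f : E → E} {Y : E → F →L[ℝ] E} {g : E → U → E} {u : ℝ → U} {Λ : ℝ → F →L[ℝ] F}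
    (hΛ : ∀ t v, 0 ≤ ⟪v, Λ t v⟫_ℝ)
    (hexc : ∀ t, T ≤ t → ∀ v, lamBar * ‖v‖ ^ 2 ≤ ⟪v, Λ t v⟫_ℝ)
    {x : ℝ → E} {θhat : ℝ → F}
    (hx : ∀ t, 0 ≤ t →
      HasDerivWithinAt x (f (x t) + Y (x t) θ + g (x t) (u t)) (Set.Ici 0) t)
    (hθhat : ∀ t, 0 ≤ t → HasDerivWithinAt θhat
      (Γ (ContinuousLinearMap.adjoint (Y (x t)) (gradV (x t))) + γ • Γ (Λ t (θ - θhat t)))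
      (Set.Ici 0) t)
    (hclf : ∀ t, 0 ≤ t →
      ⟪gradV (x t), f (x t) + Y (x t) (θhat t) + g (x t) (u t)⟫_ℝ ≤ -c₃ * V (x t)) :
    (∀ t ∈ Set.Icc (0 : ℝ) T,
      ‖x t‖ ^ 2 + ‖θ - θhat t‖ ^ 2 ≤ η₂ / η₁ * (‖x 0‖ ^ 2 + ‖θ - θhat 0‖ ^ 2)) ∧
    (∀ t, T ≤ t →
      √(‖x t‖ ^ 2 + ‖θ - θhat t‖ ^ 2) ≤
        √(η₂ / η₁) * √(‖x T‖ ^ 2 + ‖θ - θhat T‖ ^ 2) *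
          Real.exp (-(η₃ / (2 * η₂)) * (t - T))) := by
  have hη₁_pos : 0 < η₁ := hη₁ ▸ lt_min hc₁ (half_pos hμmin_pos)
  have hη₂_pos : 0 < η₂ := hη₂ ▸ lt_max_of_lt_left hc₂
  have hη₃_nonneg : 0 ≤ η₃ := hη₃ ▸ le_min (mul_nonneg hγ hlamBar) (mul_nonneg hc₁.le hc₃)
  set z : ℝ → ℝ := fun t => ‖x t‖ ^ 2 + ‖θ - θhat t‖ ^ 2
  set W : ℝ → ℝ := fun t => compositeLyapunov V Γinv (x t) (θ - θhat t)
  have hlower : ∀ t, η₁ * z t ≤ W t := fun t =>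
    hη₁ ▸ min_mul_norm_sq_add_norm_sq_le_compositeLyapunov (hVbound _).1 (hμmin _)
  have hupper : ∀ t, W t ≤ η₂ * z t := fun t =>
    hη₂ ▸ compositeLyapunov_le_max_mul_norm_sq_add_norm_sq (hVbound _).2 (hμmax _)
  have hderiv : ∀ t, 0 ≤ t → HasDerivWithinAt W
      (⟪gradV (x t), f (x t) + Y (x t) (θhat t) + g (x t) (u t)⟫_ℝ -
        γ * ⟪θ - θhat t, Λ t (θ - θhat t)⟫_ℝ) (Set.Ici 0) t := fun t ht =>
    (hasDerivWithinAt_compositeLyapunov hsymm (hV _) (hx t ht)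
      ((hθhat t ht).const_sub θ)).congr_deriv (inner_add_inner_update_eq hsymm hΓinv ..)
  refine ⟨fun t ht => ?_, fun t ht => ?_⟩
  · have hbound := le_div_mul_exp_of_lyapunov (z := z) hη₁_pos hη₂_pos le_rfl hderiv
      (fun s _ => hlower s) (fun s _ => hupper s) (fun s hs => ?_) ht.1
    · simpa only [zero_div, neg_zero, zero_mul, Real.exp_zero, mul_one] using hbound
    · have hVs : 0 ≤ V (x s) := (by positivity : 0 ≤ c₁ * ‖x s‖ ^ 2).trans (hVbound _).1
      linarith [hclf s hs, mul_nonneg hc₃ hVs, mul_nonneg hγ (hΛ s (θ - θhat s))]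
  · have hbound := le_div_mul_exp_of_lyapunov (z := z) hη₁_pos hη₂_pos hη₃_nonneg
      (fun s hs => (hderiv s (hT.trans hs)).mono (Set.Ici_subset_Ici.2 hT))
      (fun s _ => hlower s) (fun s _ => hupper s) (fun s hs => ?_) ht
    · rw [show -(η₃ / (2 * η₂)) * (t - T) = -(η₃ / η₂) * (t - T) / 2 by ring]
      exact sqrt_le_sqrt_mul_sqrt_mul_exp_half (by positivity) hbound
    · have hrate : η₃ * z s ≤ c₁ * c₃ * ‖x s‖ ^ 2 + γ * lamBar * ‖θ - θhat s‖ ^ 2 := by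
        rw [hη₃, min_comm]
        exact min_mul_add_le (sq_nonneg _) (sq_nonneg _)
      linarith [hclf s (hT.trans hs), mul_le_mul_of_nonneg_left (hVbound (x s)).1 hc₃,
        mul_le_mul_of_nonneg_left (hexc s hs (θ - θhat s)) hγ]

/-- Theorem 3 (exponential convergence under an ES-aCLF with sufficiently rich data):
the composite state `z = (x, θ - θ̂)` remains bounded on `[0, T]` and decays
exponentially for `t ≥ T` as `‖z(t)‖ ≤ √(η₂/η₁) ‖z(T)‖ exp(-(η₃/(2η₂))(t - T))`,
where `η₁ = min{c₁, λ_min(Γ⁻¹)/2}`, `η₂ = max{c₂, λ_max(Γ⁻¹)/2}`,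
`η₃ = min{γ λ̄, c₁ c₃}`. -/
theorem es_aclf_exponential_convergence
    (n p m : ℕ) (hn : 0 < n) (hp : 0 < p) (hm : 0 < m)
    (θ : EuclideanSpace ℝ (Fin p)) (γ : ℝ) (hγ : 0 < γ)
    (c₁ c₂ c₃ : ℝ) (hc₁ : 0 < c₁) (hc₂ : 0 < c₂) (hc₃ : 0 < c₃)
    (lamBar : ℝ) (hlamBar : 0 < lamBar) (T : ℝ) (hT : 0 ≤ T)
    (Γ : Matrix (Fin p) (Fin p) ℝ) (hΓsymm : Γ.IsSymm) (hΓpd : Γ.PosDef)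
    (hinv : (Γ⁻¹).IsHermitian)
    (μmin μmax η₁ η₂ η₃ : ℝ)
    (hμmin : μmin = ⨅ i, hinv.eigenvalues i)
    (hμmax : μmax = ⨆ i, hinv.eigenvalues i)
    (hη₁ : η₁ = min c₁ (μmin / 2))
    (hη₂ : η₂ = max c₂ (μmax / 2))
    (hη₃ : η₃ = min (γ * lamBar) (c₁ * c₃))
    (V : EuclideanSpace ℝ (Fin n) → ℝ)
    (gradV : EuclideanSpace ℝ (Fin n) → EuclideanSpace ℝ (Fin n))
    (hV : ∀ y, HasGradientAt V (gradV y) y)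
    (hVbound : ∀ x, c₁ * ‖x‖ ^ 2 ≤ V x ∧ V x ≤ c₂ * ‖x‖ ^ 2)
    (f : EuclideanSpace ℝ (Fin n) → EuclideanSpace ℝ (Fin n))
    (Y : EuclideanSpace ℝ (Fin n) → Matrix (Fin n) (Fin p) ℝ)
    (g : EuclideanSpace ℝ (Fin n) → Matrix (Fin n) (Fin m) ℝ)
    (u : ℝ → EuclideanSpace ℝ (Fin m))
    (Λ : ℝ → Matrix (Fin p) (Fin p) ℝ)
    (hΛsymm : ∀ t, (Λ t).IsSymm)
    (hΛpsd : ∀ t, (Λ t).PosSemidef)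
    (hexc : ∀ t, T ≤ t → ∀ v : EuclideanSpace ℝ (Fin p),
      lamBar * ‖v‖ ^ 2 ≤ ⟪v, Matrix.toEuclideanLin (Λ t) v⟫_ℝ)
    (x : ℝ → EuclideanSpace ℝ (Fin n))
    (θhat : ℝ → EuclideanSpace ℝ (Fin p))
    (hx : ∀ t, 0 ≤ t → HasDerivAt x
      (f (x t) + Matrix.toEuclideanLin (Y (x t)) θ +
        Matrix.toEuclideanLin (g (x t)) (u t)) t)
    (hθhat : ∀ t, 0 ≤ t → HasDerivAt θhat
      (Matrix.toEuclideanLin Γ (Matrix.toEuclideanLin (Y (x t)).transpose (gradV (x t))) +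
        γ • Matrix.toEuclideanLin Γ (Matrix.toEuclideanLin (Λ t) (θ - θhat t))) t)
    (hclf : ∀ t, 0 ≤ t →
      ⟪gradV (x t), f (x t) + Matrix.toEuclideanLin (Y (x t)) (θhat t) +
          Matrix.toEuclideanLin (g (x t)) (u t)⟫_ℝ ≤ -c₃ * V (x t)) :
    (∀ t ∈ Set.Icc (0 : ℝ) T,
      ‖x t‖ ^ 2 + ‖θ - θhat t‖ ^ 2 ≤
        (η₂ / η₁) * (‖x 0‖ ^ 2 + ‖θ - θhat 0‖ ^ 2)) ∧
    (∀ t, T ≤ t →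
      Real.sqrt (‖x t‖ ^ 2 + ‖θ - θhat t‖ ^ 2) ≤
        Real.sqrt (η₂ / η₁) * Real.sqrt (‖x T‖ ^ 2 + ‖θ - θhat T‖ ^ 2) *
          Real.exp (-(η₃ / (2 * η₂)) * (t - T))) := by
  have : Nonempty (Fin p) := ⟨⟨0, hp⟩⟩
  exact es_aclf_exponential_convergence_general hγ.le hc₁ hc₂ hc₃.le hlamBar.le hT
    (Γ := (Matrix.toEuclideanLin Γ).toContinuousLinearMap)
    (Γinv := (Matrix.toEuclideanLin Γ⁻¹).toContinuousLinearMap)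
    (Y := fun y => (Matrix.toEuclideanLin (Y y)).toContinuousLinearMap)
    (g := fun y => Matrix.toEuclideanLin (g y))
    (Λ := fun t => (Matrix.toEuclideanLin (Λ t)).toContinuousLinearMap)
    (leftInverse_toEuclideanLin_nonsing_inv hΓpd.det_pos.ne'.isUnit)
    (Matrix.isSymmetric_toEuclideanLin_iff.2 hinv)
    (hμmin ▸ iInf_eigenvalues_pos hΓpd.inv)
    (hμmin ▸ iInf_eigenvalues_mul_norm_sq_le hinv)
    (hμmax ▸ le_iSup_eigenvalues_mul_norm_sq hinv) hη₁ hη₂ hη₃ hV hVbound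
    (fun t => (Matrix.isPositive_toEuclideanLin_iff.2 (hΛpsd t)).inner_nonneg_right) hexc
    (fun t ht => (hx t ht).hasDerivWithinAt)
    (fun t ht => by
      rw [adjoint_toContinuousLinearMap_toEuclideanLin,
        Matrix.conjTranspose_eq_transpose_of_trivial]
      exact (hθhat t ht).hasDerivWithinAt)
    hclf
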